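/- The set of codes of triples (R, S, t), where R and S are finite term rewriting systems over a common finite signature and t is a term such that no infinite (→_{R,ε} ∪ →_S)-rewrite sequence starting from t contains infinitely many →_{R,ε}-steps, is Π¹₁-complete. -/

import Mathlib

/-!
# The dependency pair problem for a single term is Π¹₁-complete

Upper bound. A sequence of steps from `→_{R,ε} ∪ →_S` with infinitely many `→_{R,ε}`-steps is the
same as an infinite chain of segments `→*_S · →_{R,ε}` (`exists_seq_iff`). A segment has a finite
certificate: the rules, substitutions and contexts of its steps. Hence a chain is a function
`α : ℕ → ℕ` listing codes of segments, and the condition on `t` says that for every `α` the execution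
of `α 0, …, α (k - 1)` from `t` fails for some `k` (`dpTerm_iff`). Executing certificates and checking
that a triple is well-formed are primitive recursive (`primrec_segRun`, `primrecRel_wfTRS`), because
`Term.encode` is a bijection `Term ≃ ℕ` for which structural recursion on terms is
course-of-values recursion on codes (`Term.primrec_rec`).

Lower bound. For a program `c` of Mathlib's `Turing.ToPartrec` there are fixed systems `S` and `R`
and start terms such that one segment from the term for the list `v` first guesses a number `a` and
then evaluates `c` on `a :: v`; the final `R`-step at the root is possible only once the evaluation
has halted with a result `w`, and leads to the term for `w` (`round_iff`). The `S`-rules mirror the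
abstract machine `stepNormal` / `stepRet`. Infinite guessing and diverging evaluations are harmless
since they contain no `R`-steps. So the condition for this instance says that there is no infinite
sequence `v = w₀, w₁, …` with `wₖ₊₁ ∈ c.eval (aₖ :: wₖ)` (`dpTerm_machInst`). Given a Π¹₁ set
`∀ α ∃ k, p n ⟨α 0, …, α (k - 1)⟩`, let `c` extend a finite sequence by the guessed number and
diverge if `p n` holds for the sequence (`exists_extend`); then the infinite sequences of results for
`n` are exactly the `α` that refute `p n` everywhere.
-/

/-- First-order terms over the fixed countably infinite set of variables
(named by naturals): a term is a variable or a function symbol (named by a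
natural number) applied to a list of argument terms. -/
inductive Term : Type
  | var : ℕ → Term
  | app : ℕ → List Term → Term

namespace Term

/-- Homomorphic application of a substitution (a map from variables to terms). -/
def subst (σ : ℕ → Term) : Term → Term
  | var n => σ n
  | app f ts => app f (ts.attach.map (fun x => subst σ x.1))
decreasing_by
  have := List.sizeOf_lt_of_mem x.2
  simp only [Term.app.sizeOf_spec]; omega

/-- An injective encoding of terms into the natural numbers. -/
def encode : Term → ℕ
  | var n => Nat.pair 0 n
  | app f ts => Nat.pair (f + 1) (Encodable.encode (ts.attach.map (fun x => encode x.1)))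
decreasing_by
  have := List.sizeOf_lt_of_mem x.2
  simp only [Term.app.sizeOf_spec]; omega

end Term

/-- `IsVarOf n t` holds iff the variable `n` occurs in the term `t`. -/
inductive IsVarOf (n : ℕ) : Term → Prop
  | var : IsVarOf n (.var n)
  | app {f : ℕ} {ts : List Term} {t : Term} : t ∈ ts → IsVarOf n t → IsVarOf n (.app f ts)

/-- A term is ground if no variable occurs in it. -/
def Ground (t : Term) : Prop := ∀ n : ℕ, ¬ IsVarOf n t

/-- A (finite) signature is presented by a finite list of pairs
(function symbol, arity); `WFSig` states that each symbol has a unique arity. -/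
def WFSig (sig : List (ℕ × ℕ)) : Prop :=
  ∀ p ∈ sig, ∀ q ∈ sig, p.1 = q.1 → p.2 = q.2

/-- `WFTerm sig t`: `t` is a term over the signature `sig`, i.e. every function
symbol occurring in `t` belongs to `sig` and is applied to the correct number
of arguments. -/
inductive WFTerm (sig : List (ℕ × ℕ)) : Term → Prop
  | var (n : ℕ) : WFTerm sig (.var n)
  | app {f : ℕ} {ts : List Term} : (f, ts.length) ∈ sig →
      (∀ t ∈ ts, WFTerm sig t) → WFTerm sig (.app f ts)

/-- `WFTRS sig R`: the finite list of rules `R` is a term rewriting system over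
the signature `sig`: `sig` assigns unique arities, both sides of every rule are
terms over `sig`, no left-hand side is a variable, and every variable occurring
in a right-hand side occurs in the corresponding left-hand side. -/
def WFTRS (sig : List (ℕ × ℕ)) (R : List (Term × Term)) : Prop :=
  WFSig sig ∧ ∀ p ∈ R, WFTerm sig p.1 ∧ WFTerm sig p.2 ∧
    (∀ n : ℕ, p.1 ≠ .var n) ∧ (∀ n : ℕ, IsVarOf n p.2 → IsVarOf n p.1)

/-- The one-step rewrite relation `→_R` of a TRS `R`: application of a rule
under a substitution, closed under arbitrary one-hole contexts (i.e. embedded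
at any argument position at any depth). -/
inductive Rewrite (R : List (Term × Term)) : Term → Term → Prop
  | rule (l r : Term) (σ : ℕ → Term) (h : (l, r) ∈ R) :
      Rewrite R (l.subst σ) (r.subst σ)
  | congr (f : ℕ) (ts₁ ts₂ : List Term) (t t' : Term) (h : Rewrite R t t') :
      Rewrite R (.app f (ts₁ ++ t :: ts₂)) (.app f (ts₁ ++ t' :: ts₂))

/-- Many-step rewriting `→*_R` (reflexive-transitive closure of `→_R`). -/
def Reduces (R : List (Term × Term)) : Term → Term → Prop :=
  Relation.ReflTransGen (Rewrite R)

/-- `t` is a normal form of `R` (admits no `→_R`-step). -/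
def NormalForm (R : List (Term × Term)) (t : Term) : Prop := ∀ u : Term, ¬ Rewrite R t u

/-- `R` is strongly normalizing (terminating) on `t`:
no infinite rewrite sequence starts at `t`. -/
def SNon (R : List (Term × Term)) (t : Term) : Prop :=
  ¬ ∃ f : ℕ → Term, f 0 = t ∧ ∀ n : ℕ, Rewrite R (f n) (f (n + 1))

/-- `R` is weakly normalizing on `t`: some reduction from `t` ends in a normal form. -/
def WNon (R : List (Term × Term)) (t : Term) : Prop :=
  ∃ s : Term, Reduces R t s ∧ NormalForm R s

/-- `R` is confluent (Church-Rosser) on `t`. -/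
def CRon (R : List (Term × Term)) (t : Term) : Prop :=
  ∀ t₁ t₂ : Term, Reduces R t t₁ → Reduces R t t₂ →
    ∃ d : Term, Reduces R t₁ d ∧ Reduces R t₂ d

/-- `R` is weakly confluent (weakly Church-Rosser) on `t`. -/
def WCRon (R : List (Term × Term)) (t : Term) : Prop :=
  ∀ t₁ t₂ : Term, Rewrite R t t₁ → Rewrite R t t₂ →
    ∃ d : Term, Reduces R t₁ d ∧ Reduces R t₂ d

/-- A root step `s →_{R,ε} t`: `s = ℓσ` and `t = rσ` for some rule `ℓ → r` of `R`. -/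
def RootStep (R : List (Term × Term)) (s t : Term) : Prop :=
  ∃ (l r : Term) (σ : ℕ → Term), (l, r) ∈ R ∧ s = l.subst σ ∧ t = r.subst σ

/-- Code of a rewrite rule. -/
def encodeRule (p : Term × Term) : ℕ := Nat.pair p.1.encode p.2.encode

/-- Code of a finite TRS. -/
def encodeTRS (R : List (Term × Term)) : ℕ := Encodable.encode (R.map encodeRule)

/-- Code of a finite signature. -/
def encodeSig (sig : List (ℕ × ℕ)) : ℕ := Encodable.encode sig

/-- A set `A ⊆ ℕ` is Σ⁰₁ (recursively enumerable) if it is the domain of a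
partial computable function. -/
def Sigma01 (A : Set ℕ) : Prop :=
  ∃ f : ℕ →. ℕ, Nat.Partrec f ∧ ∀ n : ℕ, n ∈ A ↔ (f n).Dom

/-- `B` is many-one reducible to `A`: there is a total computable `g` with
`n ∈ B ↔ g n ∈ A` for all `n`. -/
def ManyOneRed (B A : Set ℕ) : Prop :=
  ∃ g : ℕ → ℕ, Computable g ∧ ∀ n : ℕ, n ∈ B ↔ g n ∈ A

/-- `A` is Σ⁰₁-complete. -/
def Sigma01Complete (A : Set ℕ) : Prop :=
  Sigma01 A ∧ ∀ B : Set ℕ, Sigma01 B → ManyOneRed B A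

/-- A set `A ⊆ ℕ` is Π⁰₂ if there is a decidable (computable) predicate
`P ⊆ ℕ³` with `n ∈ A ↔ ∀ x ∃ y, P n x y`. -/
def Pi02 (A : Set ℕ) : Prop :=
  ∃ p : ℕ → ℕ → ℕ → Bool,
    Computable (fun x : ℕ × ℕ × ℕ => p x.1 x.2.1 x.2.2) ∧
    ∀ n : ℕ, n ∈ A ↔ ∀ x : ℕ, ∃ y : ℕ, p n x y = true

/-- `A` is Π⁰₂-complete. -/
def Pi02Complete (A : Set ℕ) : Prop :=
  Pi02 A ∧ ∀ B : Set ℕ, Pi02 B → ManyOneRed B A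

/-- A set `A ⊆ ℕ` is Π¹₁ if there is a decidable (computable) predicate
`P ⊆ ℕ²` such that `n ∈ A` iff for every function `α : ℕ → ℕ` there exists
`k` with `P n ⟨α 0, …, α (k-1)⟩`, where `⟨·⟩` is the (computable) coding of
finite sequences of naturals. -/
def Pi11 (A : Set ℕ) : Prop :=
  ∃ p : ℕ → ℕ → Bool,
    Computable (fun x : ℕ × ℕ => p x.1 x.2) ∧
    ∀ n : ℕ, n ∈ A ↔ ∀ α : ℕ → ℕ, ∃ k : ℕ,
      p n (Encodable.encode (List.ofFn (fun i : Fin k => α i))) = true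

/-- `A` is Π¹₁-complete. -/
def Pi11Complete (A : Set ℕ) : Prop :=
  Pi11 A ∧ ∀ B : Set ℕ, Pi11 B → ManyOneRed B A

/-! ### Terms: induction, coding, and primitive recursion -/

namespace Term

/-- Structural induction on terms, with the hypothesis for all arguments of an application. -/
theorem ind {P : Term → Prop} (hv : ∀ n, P (.var n))
    (ha : ∀ f ts, (∀ t ∈ ts, P t) → P (.app f ts)) : ∀ t, P t
  | .var n => hv n
  | .app f ts => ha f ts fun t _ => ind hv ha t
decreasing_by
  have := List.sizeOf_lt_of_mem ‹t ∈ ts›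
  simp only [Term.app.sizeOf_spec]; omega

@[simp] theorem subst_var (σ : ℕ → Term) (n : ℕ) : subst σ (.var n) = σ n := by
  rw [subst]

@[simp] theorem subst_app (σ : ℕ → Term) (f : ℕ) (ts : List Term) :
    subst σ (.app f ts) = .app f (ts.map (subst σ)) := by
  rw [subst, List.attach_map_val]

theorem encode_var (n : ℕ) : encode (.var n) = Nat.pair 0 n := by
  rw [encode]

theorem encode_app (f : ℕ) (ts : List Term) :
    encode (.app f ts) = Nat.pair (f + 1) (Encodable.encode (ts.map encode)) := by
  rw [encode, List.attach_map_val]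

theorem encode_injective : ∀ s t : Term, encode s = encode t → s = t := by
  intro s
  induction s using ind with
  | hv n =>
    intro t h
    cases t with
    | var m => rw [encode_var, encode_var, Nat.pair_eq_pair] at h; rw [h.2]
    | app g us => rw [encode_var, encode_app, Nat.pair_eq_pair] at h; omega
  | ha f ts ih =>
    intro t h
    cases t with
    | var m => rw [encode_var, encode_app, Nat.pair_eq_pair] at h; omega
    | app g us =>
      rw [encode_app, encode_app, Nat.pair_eq_pair] at h
      obtain ⟨h1, h2⟩ := h
      replace h2 := Encodable.encode_injective h2
      have : ts = us := by
        clear h1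
        induction ts generalizing us with
        | nil => cases us <;> simp_all
        | cons a l ihl =>
          cases us with
          | nil => simp at h2
          | cons b m =>
            simp only [List.map_cons, List.cons.injEq] at h2
            rw [ih a (by simp) b h2.1, ihl (fun t ht => ih t (by simp [ht])) m h2.2]
      rw [this, Nat.succ_injective h1]

end Term

/-- Every element of a list of naturals is smaller than the code of the list. -/
theorem lt_encode_of_mem {l : List ℕ} {a : ℕ} (h : a ∈ l) : a < Encodable.encode l := by
  induction l with
  | nil => simp at h
  | cons b l ih =>
    rw [Encodable.encode_list_cons]
    rcases List.mem_cons.1 h with rfl | h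
    · exact Nat.lt_succ_of_le (Nat.left_le_pair _ _)
    · exact (ih h).trans (Nat.lt_succ_of_le (Nat.right_le_pair _ _))

theorem Term.encode_surjective (n : ℕ) : ∃ t : Term, t.encode = n := by
  induction n using Nat.strong_induction_on with
  | _ n ih =>
    obtain ⟨a, b, rfl⟩ : ∃ a b, n = Nat.pair a b := ⟨_, _, (Nat.pair_unpair n).symm⟩
    cases a with
    | zero => exact ⟨.var b, Term.encode_var b⟩
    | succ f =>
      have key : ∀ l : List ℕ, (∀ a ∈ l, a < Nat.pair (f + 1) b) →
          ∃ ts : List Term, ts.map Term.encode = l := by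
        intro l hl
        induction l with
        | nil => exact ⟨[], rfl⟩
        | cons a l ihl =>
          obtain ⟨t, ht⟩ := ih a (hl a (by simp))
          obtain ⟨ts, hts⟩ := ihl fun x hx => hl x (by simp [hx])
          exact ⟨t :: ts, by simp [ht, hts]⟩
      obtain ⟨ts, hts⟩ := key (Denumerable.ofNat (List ℕ) b) fun a ha => by
        have := lt_encode_of_mem ha
        rw [Denumerable.encode_ofNat] at this
        exact this.trans_le (Nat.right_le_pair _ _)
      exact ⟨.app f ts, by rw [Term.encode_app, hts, Denumerable.encode_ofNat]⟩

/-- The bijection between terms and naturals given by `Term.encode`. -/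
noncomputable def Term.equivNat : Term ≃ ℕ :=
  Equiv.ofBijective Term.encode ⟨Term.encode_injective, Term.encode_surjective⟩

/-- `Term.encode` is a bijection, so it makes `Term` denumerable (and hence `Primcodable`), with
the codes given by `Term.encode`. -/
noncomputable instance : Denumerable Term := Denumerable.mk' Term.equivNat

theorem encode_term (t : Term) : Encodable.encode t = t.encode := rfl

theorem encode_list_map {α : Type} [Encodable α] (f : α → ℕ)
    (hf : ∀ a, f a = Encodable.encode a) (l : List α) :
    Encodable.encode (l.map f) = Encodable.encode l := by
  induction l with
  | nil => rfl
  | cons a l ih => simp [Encodable.encode_list_cons, ih, hf]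

theorem encodeTRS_eq (R : List (Term × Term)) : encodeTRS R = Encodable.encode R :=
  encode_list_map _ (fun _ => rfl) R

theorem Term.encode_app' (f : ℕ) (ts : List Term) :
    Encodable.encode (Term.app f ts) = Nat.pair (f + 1) (Encodable.encode ts) := by
  rw [encode_term, Term.encode_app, encode_list_map Term.encode fun _ => rfl]

theorem primrec_app : Primrec₂ Term.app := by
  refine Primrec.encode_iff.1 (Primrec.of_eq
    (f := fun p : ℕ × List Term => Nat.pair (p.1 + 1) (Encodable.encode p.2)) ?_ ?_)
  · exact Primrec₂.natPair.comp (Primrec.succ.comp Primrec.fst) (Primrec.encode.comp Primrec.snd)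
  · intro p; rw [Term.encode_app']

theorem primrec_var : Primrec Term.var := by
  refine Primrec.encode_iff.1 (Primrec.of_eq (f := fun n : ℕ => Nat.pair 0 n) ?_ ?_)
  · exact Primrec₂.natPair.comp (Primrec.const 0) Primrec.id
  · intro p; rw [encode_term, Term.encode_var]

/-- A function on terms defined by structural recursion from primitive recursive data (with a
parameter `x`) is primitive recursive. The arguments of an application have smaller codes than the
application, so this is course-of-values recursion on codes. -/
theorem Term.primrec_rec {α β : Type} [Primcodable α] [Primcodable β] {F : α → Term → β}
    {v : α → ℕ → β} {a : α → ℕ × List β → β} (hv : Primrec₂ v) (ha : Primrec₂ a)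
    (h1 : ∀ x n, F x (.var n) = v x n)
    (h2 : ∀ x f ts, F x (.app f ts) = a x (f, ts.map (F x))) : Primrec₂ F := by
  have key : Primrec₂ fun (x : α) (n : ℕ) => F x (Denumerable.ofNat Term n) := by
    -- `IH` lists the values of `F x` on the terms with codes below `IH.length`, which is itself the
    -- code at hand. The default value `v x 0` of the look-up is never used.
    refine Primrec.nat_strong_rec _ (g := fun x IH => some
      (if IH.length.unpair.1 = 0 then v x IH.length.unpair.2 else
        a x (IH.length.unpair.1 - 1, (Denumerable.ofNat (List ℕ) IH.length.unpair.2).map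
          fun m => (IH[m]?).getD (v x 0)))) ?_ ?_
    · have hlen : Primrec fun p : α × List β => p.2.length.unpair :=
        Primrec.unpair.comp (Primrec.list_length.comp Primrec.snd)
      refine Primrec.option_some.comp (Primrec.ite ?_ ?_ ?_)
      · exact Primrec.eq.comp (Primrec.fst.comp hlen) (Primrec.const 0)
      · exact hv.comp Primrec.fst (Primrec.snd.comp hlen)
      · refine ha.comp Primrec.fst (Primrec.pair ?_ (Primrec.list_map ?_ ?_))
        · exact Primrec.nat_sub.comp (Primrec.fst.comp hlen) (Primrec.const 1)
        · exact (Primrec.ofNat (List ℕ)).comp (Primrec.snd.comp hlen)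
        · exact Primrec.option_getD.comp
            (Primrec.list_getElem?.comp (Primrec.snd.comp Primrec.fst) Primrec.snd)
            (hv.comp (Primrec.fst.comp Primrec.fst) (Primrec.const 0))
    · intro x n
      obtain ⟨t, rfl⟩ := Term.encode_surjective n
      rw [← encode_term, Denumerable.ofNat_encode]
      simp only [List.length_map, List.length_range]
      congr 1
      cases t with
      | var m => rw [encode_term, Term.encode_var]; simp [h1]
      | app f ts =>
        rw [Term.encode_app', Nat.unpair_pair, h2]
        simp only [Nat.add_eq_zero_iff, one_ne_zero, and_false, if_false, Nat.add_sub_cancel]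
        rw [← encode_list_map (fun t : Term => Encodable.encode t) fun _ => rfl,
          Denumerable.ofNat_encode, List.map_map]
        congr 2
        refine List.map_congr_left fun t ht => ?_
        have hlt : Encodable.encode t <
            Nat.pair (f + 1) (Encodable.encode (ts.map fun t => Encodable.encode t)) :=
          (lt_encode_of_mem (List.mem_map_of_mem ht)).trans_le (Nat.right_le_pair _ _)
        simp [hlt]
  exact (key.comp Primrec.fst (Primrec.encode.comp Primrec.snd)).of_eq fun p => by simp

/-! ### Infinitely many root steps as an infinite chain of finite segments -/

/-- A sequence of steps from `R ∪ S` with infinitely many `R`-steps is the same thing as an infinite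
sequence of segments, each made of finitely many `S`-steps followed by an `R`-step. -/
theorem exists_seq_iff {T : Type} {R S : T → T → Prop} {t : T} :
    (∃ f : ℕ → T, f 0 = t ∧ (∀ k, R (f k) (f (k + 1)) ∨ S (f k) (f (k + 1))) ∧
      ∀ m, ∃ k, m ≤ k ∧ R (f k) (f (k + 1))) ↔
    ∃ x : ℕ → T, x 0 = t ∧ ∀ k, ∃ y, Relation.ReflTransGen S (x k) y ∧ R y (x (k + 1)) := by
  classical
  constructor
  · rintro ⟨f, h0, hf, hR⟩
    have hmin : ∀ m, ∃ k, m ≤ k ∧ R (f k) (f (k + 1)) ∧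
        ∀ j, m ≤ j → j < k → S (f j) (f (j + 1)) := fun m =>
      ⟨Nat.find (hR m), (Nat.find_spec (hR m)).1, (Nat.find_spec (hR m)).2, fun j hj hlt =>
        (hf j).resolve_left fun h => Nat.find_min (hR m) hlt ⟨hj, h⟩⟩
    choose g hg1 hg2 hg3 using hmin
    let pos : ℕ → ℕ := fun k => Nat.rec 0 (fun _ p => g p + 1) k
    refine ⟨fun k => f (pos k), h0, fun k => ⟨f (g (pos k)), ?_, hg2 _⟩⟩
    have : ∀ b, pos k ≤ b → b ≤ g (pos k) → Relation.ReflTransGen S (f (pos k)) (f b) := by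
      intro b hb
      induction b, hb using Nat.le_induction with
      | base => exact fun _ => .refl
      | succ b hb ih => exact fun h => (ih (by omega)).tail (hg3 _ _ hb (by omega))
    exact this _ (hg1 _) le_rfl
  · rintro ⟨x, h0, hx⟩
    -- `G k m s`: exactly `m` further `S`-steps from `s` lead to the `R`-step ending in `x (k + 1)`.
    let G : ℕ → ℕ → T → Prop := fun k m =>
      Nat.rec (fun s => R s (x (k + 1))) (fun _ ih s => ∃ s', S s s' ∧ ih s') m
    have hG : ∀ k, ∃ m, G k m (x k) := by
      intro k
      obtain ⟨y, hy, hR⟩ := hx k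
      generalize x k = s at hy
      induction hy using Relation.ReflTransGen.head_induction_on with
      | refl => exact ⟨0, hR⟩
      | head h _ ih => obtain ⟨m, hm⟩ := ih; exact ⟨m + 1, _, h, hm⟩
    let St := {p : T × ℕ × ℕ // G p.2.2 p.2.1 p.1}
    have hnext : ∀ p : St, ∃ q : St, (p.1.2.1 = 0 ∧ R p.1.1 q.1.1) ∨
        (S p.1.1 q.1.1 ∧ p.1.2.1 = q.1.2.1 + 1) := by
      rintro ⟨⟨s, m, k⟩, hp⟩
      cases m with
      | zero =>
        obtain ⟨m', hm'⟩ := hG (k + 1)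
        exact ⟨⟨(x (k + 1), m', k + 1), hm'⟩, .inl ⟨rfl, hp⟩⟩
      | succ m =>
        obtain ⟨s', hs, hs'⟩ := hp
        exact ⟨⟨(s', m, k), hs'⟩, .inr ⟨hs, rfl⟩⟩
    choose nx hnx using hnext
    obtain ⟨m0, hm0⟩ := hG 0
    let it : ℕ → St := fun i => Nat.rec ⟨(x 0, m0, 0), hm0⟩ (fun _ p => nx p) i
    have hit : ∀ i, it (i + 1) = nx (it i) := fun _ => rfl
    refine ⟨fun i => (it i).1.1, h0, fun k => ?_, fun m => ?_⟩
    · rcases hnx (it k) with h | h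
      · exact .inl h.2
      · exact .inr h.1
    · have : ∀ c i, (it i).1.2.1 = c → ∃ k, i ≤ k ∧ R (it k).1.1 (it (k + 1)).1.1 := by
        intro c
        induction c with
        | zero =>
          intro i hi
          rcases hnx (it i) with h | h
          · exact ⟨i, le_rfl, h.2⟩
          · omega
        | succ c ih =>
          intro i hi
          rcases hnx (it i) with h | h
          · omega
          · obtain ⟨k, hk, hR⟩ := ih (i + 1) (by rw [hit]; omega)
            exact ⟨k, by omega, hR⟩
      exact this _ m rfl

/-! ### Decidability of well-formedness -/

/-- A property of terms that is defined by structural recursion as a primitive recursive condition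
on variables, and a primitive recursive condition on the root symbol and its number of arguments
together with the property for all arguments, is primitive recursive. -/
theorem Term.primrecRel_rec {α : Type} [Primcodable α] {P : α → Term → Prop}
    {v : α → ℕ → Prop} {q : α → ℕ × ℕ → Prop} (hv : PrimrecRel v) (hq : PrimrecRel q)
    (h1 : ∀ x n, P x (.var n) ↔ v x n)
    (h2 : ∀ x f ts, P x (.app f ts) ↔ q x (f, ts.length) ∧ ∀ t ∈ ts, P x t) : PrimrecRel P := by
  classical
  refine Primrec₂.primrecRel (Term.primrec_rec (v := fun x n => decide (v x n))
    (a := fun x p => decide (q x (p.1, p.2.length) ∧ ∀ b ∈ p.2, b = true)) hv.decide ?_ ?_ ?_)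
  · refine PrimrecPred.decide (p := fun z : α × ℕ × List Bool =>
      q z.1 (z.2.1, z.2.2.length) ∧ ∀ b ∈ z.2.2, b = true) (.and ?_ ?_)
    · exact hq.comp Primrec.fst (Primrec.pair (Primrec.fst.comp Primrec.snd)
        (Primrec.list_length.comp (Primrec.snd.comp Primrec.snd)))
    · exact PrimrecPred.comp (PrimrecPred.forall_mem_list (p := fun b : Bool => b = true)
        (Primrec.eq.comp Primrec.id (Primrec.const true))) (Primrec.snd.comp Primrec.snd)
  · simp [h1]
  · simp [h2]

theorem primrecRel_mem {α : Type} [Primcodable α] :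
    PrimrecRel fun (a : α) (l : List α) => a ∈ l := by
  have : PrimrecRel fun (l : List α) (a : α) => ∃ b ∈ l, b = a := PrimrecRel.exists_mem_list Primrec.eq
  exact (this.comp Primrec.snd Primrec.fst).of_eq fun p => by simp

theorem primrecRel_wfTerm : PrimrecRel WFTerm := by
  refine Term.primrecRel_rec (v := fun _ _ => True) (q := fun sig p => p ∈ sig) ?_ ?_ ?_ ?_
  · exact (Primrec.eq.comp (Primrec.const 0) (Primrec.const 0)).of_eq fun _ => by simp
  · exact primrecRel_mem.comp Primrec.snd Primrec.fst
  · exact fun sig n => ⟨fun _ => trivial, fun _ => .var n⟩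
  · exact fun sig f ts => ⟨fun h => by cases h with | app h1 h2 => exact ⟨h1, h2⟩,
      fun h => .app h.1 h.2⟩

theorem isVarOf_var {n m : ℕ} : IsVarOf n (.var m) ↔ n = m :=
  ⟨fun h => by cases h; rfl, fun h => h ▸ .var⟩

theorem isVarOf_app {n f : ℕ} {ts : List Term} :
    IsVarOf n (.app f ts) ↔ ∃ t ∈ ts, IsVarOf n t :=
  ⟨fun h => by cases h with | app h1 h2 => exact ⟨_, h1, h2⟩, fun ⟨_, h1, h2⟩ => .app h1 h2⟩

theorem primrecRel_isVarOf : PrimrecRel IsVarOf := by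
  have : PrimrecRel fun n t => ¬ IsVarOf n t := by
    refine Term.primrecRel_rec (v := fun n m => ¬ n = m) (q := fun _ _ => True) ?_ ?_ ?_ ?_
    · exact PrimrecPred.not Primrec.eq
    · exact (Primrec.eq.comp (Primrec.const 0) (Primrec.const 0)).of_eq fun _ => by simp
    · exact fun n m => by rw [isVarOf_var]
    · exact fun n f ts => by simp [isVarOf_app]
  exact (PrimrecPred.not this).of_eq fun _ => not_not

theorem lt_of_isVarOf {n : ℕ} {t : Term} (h : IsVarOf n t) : n < Encodable.encode t + 1 := by
  induction h with
  | var => rw [encode_term, Term.encode_var]; exact Nat.lt_succ_of_le (Nat.right_le_pair _ _)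
  | @app f ts t ht _ ih =>
    rw [Term.encode_app', ← encode_list_map (fun t : Term => Encodable.encode t) fun _ => rfl]
    have h1 := lt_encode_of_mem (List.mem_map_of_mem (f := fun t : Term => Encodable.encode t) ht)
    have h2 := Nat.right_le_pair (f + 1)
      (Encodable.encode (ts.map fun t : Term => Encodable.encode t))
    omega

theorem primrecPred_varCond :
    PrimrecPred fun p : Term × Term => ∀ n, IsVarOf n p.2 → IsVarOf n p.1 := by
  have h1 : PrimrecRel fun (n : ℕ) (p : Term × Term) => ¬ IsVarOf n p.2 ∨ IsVarOf n p.1 :=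
    .or (.not (primrecRel_isVarOf.comp Primrec.fst (Primrec.snd.comp Primrec.snd)))
      (primrecRel_isVarOf.comp Primrec.fst (Primrec.fst.comp Primrec.snd))
  refine (h1.forall_mem_list.comp (Primrec.list_range.comp
    (Primrec.succ.comp (Primrec.encode.comp Primrec.snd))) Primrec.id).of_eq fun p => ?_
  simp only [List.mem_range, id, ← imp_iff_not_or]
  exact ⟨fun h n hn => h n (lt_of_isVarOf hn) hn, fun h n _ => h n⟩

theorem primrecPred_not_var : PrimrecPred fun t : Term => ∀ n, t ≠ .var n := by
  refine (PrimrecPred.not (Primrec.eq.comp (Primrec.fst.comp (Primrec.unpair.comp Primrec.encode))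
    (Primrec.const 0))).of_eq fun t => ?_
  cases t with
  | var n => simp [encode_term, Term.encode_var]
  | app f ts => simp [Term.encode_app']

theorem primrecRel_wfTRS : PrimrecRel WFTRS := by
  have hsig : PrimrecPred WFSig := by
    have h1 : PrimrecRel fun (q p : ℕ × ℕ) => ¬ p.1 = q.1 ∨ p.2 = q.2 :=
      .or (.not (Primrec.eq.comp (Primrec.fst.comp Primrec.snd) (Primrec.fst.comp Primrec.fst)))
        (Primrec.eq.comp (Primrec.snd.comp Primrec.snd) (Primrec.snd.comp Primrec.fst))
    have h2 : PrimrecRel fun (p : ℕ × ℕ) (sig : List (ℕ × ℕ)) =>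
        ∀ q ∈ sig, ¬ p.1 = q.1 ∨ p.2 = q.2 := h1.forall_mem_list.comp Primrec.snd Primrec.fst
    exact (h2.forall_mem_list.comp Primrec.id Primrec.id).of_eq fun sig => by
      simp only [← imp_iff_not_or]; rfl
  have hrule : PrimrecRel fun (p : Term × Term) (sig : List (ℕ × ℕ)) =>
      WFTerm sig p.1 ∧ WFTerm sig p.2 ∧ (∀ n, p.1 ≠ .var n) ∧
        (∀ n, IsVarOf n p.2 → IsVarOf n p.1) :=
    .and (primrecRel_wfTerm.comp Primrec.snd (Primrec.fst.comp Primrec.fst))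
      (.and (primrecRel_wfTerm.comp Primrec.snd (Primrec.snd.comp Primrec.fst))
        (.and (primrecPred_not_var.comp (Primrec.fst.comp Primrec.fst))
          (primrecPred_varCond.comp Primrec.fst)))
  exact .and (hsig.comp Primrec.fst) (hrule.forall_mem_list.comp Primrec.snd Primrec.fst)

/-! ### Certified rewrite steps, and the upper bound -/

/-- The data of an instance of the problem: signature, `R`, `S` and the start term. -/
abbrev Inst := List (ℕ × ℕ) × List (Term × Term) × List (Term × Term) × Term

/-- One layer of a context: a symbol with the arguments to the left and right of the hole. -/
abbrev Frame := ℕ × List Term × List Term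

/-- A certificate for a rewrite step: the rule, the substitution (as the list of its values on an
initial segment of the variables), and the context (innermost layer first). -/
abbrev Cert := (Term × Term) × List Term × List Frame

/-- A certificate for finitely many `S`-steps (anywhere) followed by a root `R`-step. -/
abbrev Seg := List Cert × (Term × Term) × List Term

/-- Filling the hole of a context. -/
def plug (C : List Frame) (t : Term) : Term :=
  C.foldl (fun t F => .app F.1 (F.2.1 ++ t :: F.2.2)) t

/-- The substitution given by a list, which is the identity on variables beyond the list. -/
def substOf (L : List Term) (n : ℕ) : Term := (L[n]?).getD (.var n)

open Classical in
/-- Execute the rewrite step certified by `c` on `s`, provided that the certificate is correct. -/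
noncomputable def certStep (R : List (Term × Term)) (s : Term) (c : Cert) : Option Term :=
  if c.1 ∈ R ∧ s = plug c.2.2 (c.1.1.subst (substOf c.2.1)) then
    some (plug c.2.2 (c.1.2.subst (substOf c.2.1))) else none

/-- Execute a certified segment. -/
noncomputable def segStep (R S : List (Term × Term)) (s : Term) (g : Seg) : Option Term :=
  (g.1.foldl (fun o c => o.bind fun s => certStep S s c) (some s)).bind
    fun s => certStep R s (g.2.1, g.2.2, [])

/-- Execute a list of coded segments from the start term. -/
noncomputable def segRun (d : Inst) (L : List ℕ) : Option Term :=
  L.foldl (fun o a => o.bind fun s => segStep d.2.1 d.2.2.1 s (Denumerable.ofNat Seg a))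
    (some d.2.2.2)

theorem primrec_plug : Primrec₂ plug := by
  refine Primrec.list_foldl (f := fun p : List Frame × Term => p.1) (g := fun p => p.2)
    (h := fun _ q => Term.app q.2.1 (q.2.2.1 ++ q.1 :: q.2.2.2)) Primrec.fst Primrec.snd ?_
  have h : Primrec fun z : (List Frame × Term) × (Term × Frame) => z.2.2 :=
    Primrec.snd.comp Primrec.snd
  exact primrec_app.comp (Primrec.fst.comp h) (Primrec.list_append.comp
    (Primrec.fst.comp (Primrec.snd.comp h)) (Primrec.list_cons.comp
      (Primrec.fst.comp Primrec.snd) (Primrec.snd.comp (Primrec.snd.comp h))))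

theorem primrec_subst : Primrec₂ fun (L : List Term) (t : Term) => t.subst (substOf L) := by
  refine Term.primrec_rec (v := substOf) (a := fun _ p => .app p.1 p.2) ?_ ?_ ?_ ?_
  · exact Primrec.option_getD.comp Primrec.list_getElem? (primrec_var.comp Primrec.snd)
  · exact primrec_app.comp (Primrec.fst.comp Primrec.snd) (Primrec.snd.comp Primrec.snd)
  · intro L n; simp
  · intro L f ts; simp

theorem primrec_certStep :
    Primrec fun p : List (Term × Term) × Term × Cert => certStep p.1 p.2.1 p.2.2 := by
  classical
  have hc : Primrec fun p : List (Term × Term) × Term × Cert => p.2.2 :=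
    Primrec.snd.comp Primrec.snd
  have hC := Primrec.snd.comp (Primrec.snd.comp hc)
  have hL := Primrec.fst.comp (Primrec.snd.comp hc)
  refine Primrec.ite (.and ?_ ?_) (Primrec.option_some.comp ?_) (Primrec.const none)
  · exact primrecRel_mem.comp (Primrec.fst.comp hc) Primrec.fst
  · exact Primrec.eq.comp (Primrec.fst.comp Primrec.snd) (primrec_plug.comp hC
      (primrec_subst.comp hL (Primrec.fst.comp (Primrec.fst.comp hc))))
  · exact primrec_plug.comp hC (primrec_subst.comp hL (Primrec.snd.comp (Primrec.fst.comp hc)))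

theorem primrec_segStep : Primrec fun p : (List (Term × Term) × List (Term × Term)) × Term × Seg =>
    segStep p.1.1 p.1.2 p.2.1 p.2.2 := by
  have hg : Primrec fun p : (List (Term × Term) × List (Term × Term)) × Term × Seg => p.2.2 :=
    Primrec.snd.comp Primrec.snd
  refine Primrec.option_bind (Primrec.list_foldl (Primrec.fst.comp hg)
    (Primrec.option_some.comp (Primrec.fst.comp Primrec.snd))
    (h := fun p q => q.1.bind fun s => certStep p.1.2 s q.2) ?_) ?_
  · refine Primrec.option_bind (Primrec.fst.comp Primrec.snd) ?_
    refine primrec_certStep.comp (Primrec.pair ?_ (Primrec.pair Primrec.snd ?_))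
    · exact Primrec.snd.comp (Primrec.fst.comp (Primrec.fst.comp Primrec.fst))
    · exact Primrec.snd.comp (Primrec.snd.comp Primrec.fst)
  · refine primrec_certStep.comp (Primrec.pair ?_ (Primrec.pair Primrec.snd (Primrec.pair ?_
      (Primrec.pair ?_ (Primrec.const [])))))
    · exact Primrec.fst.comp (Primrec.fst.comp Primrec.fst)
    · exact Primrec.fst.comp (Primrec.snd.comp (hg.comp Primrec.fst))
    · exact Primrec.snd.comp (Primrec.snd.comp (hg.comp Primrec.fst))

theorem primrec_segRun : Primrec₂ segRun := by
  refine Primrec.list_foldl (f := fun p : Inst × List ℕ => p.2) (g := fun p => some p.1.2.2.2)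
    (h := fun p q => q.1.bind fun s =>
      segStep p.1.2.1 p.1.2.2.1 s (Denumerable.ofNat Seg q.2)) Primrec.snd (Primrec.option_some.comp
    (Primrec.snd.comp (Primrec.snd.comp (Primrec.snd.comp Primrec.fst)))) ?_
  refine Primrec.option_bind (Primrec.fst.comp Primrec.snd) ?_
  have hd : Primrec fun z : ((Inst × List ℕ) × Option Term × ℕ) × Term => z.1.1.1 :=
    Primrec.fst.comp (Primrec.fst.comp Primrec.fst)
  exact primrec_segStep.comp (Primrec.pair (Primrec.pair (Primrec.fst.comp (Primrec.snd.comp hd))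
    (Primrec.fst.comp (Primrec.snd.comp (Primrec.snd.comp hd)))) (Primrec.pair Primrec.snd
      ((Primrec.ofNat Seg).comp (Primrec.snd.comp (Primrec.snd.comp Primrec.fst)))))

/-- The result of a substitution depends on finitely many of its values only. -/
theorem Term.exists_bound (t : Term) :
    ∃ N, ∀ σ τ : ℕ → Term, (∀ n < N, σ n = τ n) → t.subst σ = t.subst τ := by
  induction t using Term.ind with
  | hv n => exact ⟨n + 1, fun σ τ h => by simpa using h n (by omega)⟩
  | ha f ts ih =>
    have : ∃ N, ∀ σ τ : ℕ → Term, (∀ n < N, σ n = τ n) → ∀ t ∈ ts, t.subst σ = t.subst τ := by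
      induction ts with
      | nil => exact ⟨0, by simp⟩
      | cons a l ihl =>
        obtain ⟨N, hN⟩ := ih a (by simp)
        obtain ⟨M, hM⟩ := ihl fun t ht => ih t (by simp [ht])
        refine ⟨max N M, fun σ τ h t ht => ?_⟩
        rcases List.mem_cons.1 ht with rfl | ht
        · exact hN _ _ fun n hn => h n (by omega)
        · exact hM _ _ (fun n hn => h n (by omega)) t ht
    obtain ⟨N, hN⟩ := this
    exact ⟨N, fun σ τ h => by simpa using List.map_congr_left (hN σ τ h)⟩

/-- On a single rule, every substitution agrees with one that is given by a finite list. -/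
theorem exists_substOf (σ : ℕ → Term) (l r : Term) :
    ∃ L, l.subst σ = l.subst (substOf L) ∧ r.subst σ = r.subst (substOf L) := by
  obtain ⟨N, hN⟩ := l.exists_bound
  obtain ⟨M, hM⟩ := r.exists_bound
  have h : ∀ n < max N M, σ n = substOf ((List.range (max N M)).map σ) n := fun n hn => by
    simp [substOf, List.getElem?_range hn]
  exact ⟨_, hN _ _ fun n hn => h n (by omega), hM _ _ fun n hn => h n (by omega)⟩

theorem rewrite_plug {R : List (Term × Term)} {s t : Term} (C : List Frame) (h : Rewrite R s t) :
    Rewrite R (plug C s) (plug C t) := by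
  induction C generalizing s t with
  | nil => exact h
  | cons F C ih => exact ih (.congr _ _ _ _ _ h)

theorem rewrite_iff {R : List (Term × Term)} {s t : Term} :
    Rewrite R s t ↔ ∃ c, certStep R s c = some t := by
  constructor
  · intro h
    suffices ∃ c : Cert, c.1 ∈ R ∧ s = plug c.2.2 (c.1.1.subst (substOf c.2.1)) ∧
        t = plug c.2.2 (c.1.2.subst (substOf c.2.1)) by
      obtain ⟨c, h1, h2, h3⟩ := this
      exact ⟨c, by rw [certStep, if_pos ⟨h1, h2⟩, h3]⟩
    induction h with
    | rule l r σ h =>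
      obtain ⟨L, h1, h2⟩ := exists_substOf σ l r
      exact ⟨((l, r), L, []), h, h1, h2⟩
    | congr f ts₁ ts₂ t t' _ ih =>
      obtain ⟨⟨p, L, C⟩, h1, h2, h3⟩ := ih
      refine ⟨(p, L, C ++ [(f, ts₁, ts₂)]), h1, ?_, ?_⟩
      · simp [plug, List.foldl_append] at h2 ⊢; exact h2
      · simp [plug, List.foldl_append] at h3 ⊢; exact h3
  · rintro ⟨⟨⟨l, r⟩, L, C⟩, h⟩
    rw [certStep] at h
    split_ifs at h with h'
    obtain ⟨h1, rfl⟩ := h'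
    obtain rfl := Option.some_injective _ h
    exact rewrite_plug C (.rule l r _ h1)

theorem rootStep_iff {R : List (Term × Term)} {s t : Term} :
    RootStep R s t ↔ ∃ p L, certStep R s (p, L, []) = some t := by
  constructor
  · rintro ⟨l, r, σ, h, rfl, rfl⟩
    obtain ⟨L, h1, h2⟩ := exists_substOf σ l r
    exact ⟨(l, r), L, by rw [certStep, if_pos ⟨h, h1⟩, h2]; rfl⟩
  · rintro ⟨⟨l, r⟩, L, h⟩
    rw [certStep] at h
    split_ifs at h with h'
    exact ⟨l, r, _, h'.1, h'.2, (Option.some_injective _ h).symm⟩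

theorem foldl_bind_none {α β : Type} (f : β → α → Option β) (l : List α) :
    l.foldl (fun o a => o.bind fun s => f s a) none = none := by
  induction l with
  | nil => rfl
  | cons a l ih => exact ih

theorem reduces_iff {S : List (Term × Term)} {s t : Term} :
    Relation.ReflTransGen (Rewrite S) s t ↔
      ∃ l : List Cert, l.foldl (fun o c => o.bind fun s => certStep S s c) (some s) = some t := by
  constructor
  · intro h
    induction h with
    | refl => exact ⟨[], rfl⟩
    | tail _ h ih =>
      obtain ⟨l, hl⟩ := ih
      obtain ⟨c, hc⟩ := rewrite_iff.1 h
      exact ⟨l ++ [c], by simp [List.foldl_append, hl, hc]⟩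
  · rintro ⟨l, hl⟩
    induction l generalizing s with
    | nil => obtain rfl := Option.some_injective _ hl; exact .refl
    | cons c l ih =>
      simp only [List.foldl_cons, Option.bind_some] at hl
      cases h : certStep S s c with
      | none => rw [h, foldl_bind_none] at hl; cases hl
      | some u => rw [h] at hl; exact .head (rewrite_iff.2 ⟨c, h⟩) (ih hl)

theorem segStep_iff {R S : List (Term × Term)} {s t : Term} :
    (∃ y, Relation.ReflTransGen (Rewrite S) s y ∧ RootStep R y t) ↔
      ∃ g, segStep R S s g = some t := by
  constructor
  · rintro ⟨y, hy, h⟩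
    obtain ⟨l, hl⟩ := reduces_iff.1 hy
    obtain ⟨p, L, h⟩ := rootStep_iff.1 h
    exact ⟨(l, p, L), by rw [segStep, hl]; exact h⟩
  · rintro ⟨⟨l, p, L⟩, h⟩
    obtain ⟨y, h1, h2⟩ := Option.bind_eq_some_iff.1 h
    exact ⟨y, reduces_iff.2 ⟨l, h1⟩, rootStep_iff.2 ⟨p, L, h2⟩⟩

/-- The dependency pair condition for an instance: no infinite sequence of root `R`-steps and
`S`-steps from the start term has infinitely many root `R`-steps. -/
def DPTerm (d : Inst) : Prop :=
  ∀ f : ℕ → Term, f 0 = d.2.2.2 →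
    (∀ k : ℕ, RootStep d.2.1 (f k) (f (k + 1)) ∨ Rewrite d.2.2.1 (f k) (f (k + 1))) →
    ¬ ∀ m : ℕ, ∃ k : ℕ, m ≤ k ∧ RootStep d.2.1 (f k) (f (k + 1))

/-- Well-formedness of an instance. -/
def WFInst (d : Inst) : Prop := WFTRS d.1 d.2.1 ∧ WFTRS d.1 d.2.2.1 ∧ WFTerm d.1 d.2.2.2

/-- The condition fails exactly if there is an infinite chain of segments, each consisting of
finitely many `S`-steps and a root `R`-step. -/
theorem dpTerm_iff_chain (d : Inst) :
    ¬ DPTerm d ↔ ∃ x : ℕ → Term, x 0 = d.2.2.2 ∧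
      ∀ k, ∃ y, Relation.ReflTransGen (Rewrite d.2.2.1) (x k) y ∧ RootStep d.2.1 y (x (k + 1)) := by
  rw [← exists_seq_iff, DPTerm]
  push Not
  rfl

/-- The condition as a `∀ α ∃ k` statement with a primitive recursive matrix: no sequence `α` of
coded segments can be executed forever. -/
theorem dpTerm_iff (d : Inst) :
    DPTerm d ↔ ∀ α : ℕ → ℕ, ∃ k : ℕ, segRun d (List.ofFn fun i : Fin k => α i) = none := by
  have hsucc : ∀ (α : ℕ → ℕ) k, segRun d (List.ofFn fun i : Fin (k + 1) => α i) =
      (segRun d (List.ofFn fun i : Fin k => α i)).bind fun s =>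
        segStep d.2.1 d.2.2.1 s (Denumerable.ofNat Seg (α k)) := by
    intro α k
    rw [List.ofFn_succ_last, segRun, List.foldl_append]
    rfl
  rw [← not_iff_not, dpTerm_iff_chain]
  push Not
  simp only [segStep_iff, Option.ne_none_iff_exists']
  constructor
  · rintro ⟨x, h0, hx⟩
    choose g hg using hx
    refine ⟨fun k => Encodable.encode (g k), fun k => ⟨x k, ?_⟩⟩
    induction k with
    | zero => rw [h0]; rfl
    | succ k ih =>
      rw [hsucc fun k => Encodable.encode (g k), ih, Option.bind_some, Denumerable.ofNat_encode, hg]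
  · rintro ⟨α, hα⟩
    choose x hx using hα
    refine ⟨x, Option.some_injective _ ((hx 0).symm.trans rfl),
      fun k => ⟨Denumerable.ofNat Seg (α k), ?_⟩⟩
    rw [← hx (k + 1), hsucc, hx k]; rfl

/-- Membership in the set of triples, read as: being the code of a well-formed instance
with the dependency pair condition. Every natural number is the code of exactly one instance. -/
theorem mem_dpSet_iff (n : ℕ) : (∃ (sig : List (ℕ × ℕ)) (R S : List (Term × Term)) (t : Term),
      WFTRS sig R ∧ WFTRS sig S ∧ WFTerm sig t ∧
      n = Nat.pair (encodeSig sig) (Nat.pair (encodeTRS R) (Nat.pair (encodeTRS S) t.encode)) ∧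
      ∀ f : ℕ → Term, f 0 = t →
        (∀ k : ℕ, RootStep R (f k) (f (k + 1)) ∨ Rewrite S (f k) (f (k + 1))) →
        ¬ ∀ m : ℕ, ∃ k : ℕ, m ≤ k ∧ RootStep R (f k) (f (k + 1))) ↔
    WFInst (Denumerable.ofNat Inst n) ∧ DPTerm (Denumerable.ofNat Inst n) := by
  have henc : ∀ (sig : List (ℕ × ℕ)) (R S : List (Term × Term)) (t : Term),
      Nat.pair (encodeSig sig) (Nat.pair (encodeTRS R) (Nat.pair (encodeTRS S) t.encode)) =
        Encodable.encode ((sig, R, S, t) : Inst) := fun sig R S t => by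
    simp only [encodeTRS_eq, Encodable.encode_prod_val]; rfl
  constructor
  · rintro ⟨sig, R, S, t, h1, h2, h3, rfl, h4⟩
    rw [henc, Denumerable.ofNat_encode]
    exact ⟨⟨h1, h2, h3⟩, h4⟩
  · rintro ⟨⟨h1, h2, h3⟩, h4⟩
    exact ⟨_, _, _, _, h1, h2, h3, by rw [henc]; exact (Denumerable.encode_ofNat n).symm, h4⟩

theorem pi11_dp :
    Pi11 {n | WFInst (Denumerable.ofNat Inst n) ∧ DPTerm (Denumerable.ofNat Inst n)} := by
  classical
  have hP : PrimrecRel fun n L => WFInst (Denumerable.ofNat Inst n) ∧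
      segRun (Denumerable.ofNat Inst n) (Denumerable.ofNat (List ℕ) L) = none := by
    have hd : Primrec fun p : ℕ × ℕ => Denumerable.ofNat Inst p.1 :=
      (Primrec.ofNat Inst).comp Primrec.fst
    have h1 := Primrec.fst.comp hd
    have h2 := Primrec.fst.comp (Primrec.snd.comp hd)
    have h3 := Primrec.fst.comp (Primrec.snd.comp (Primrec.snd.comp hd))
    have h4 := Primrec.snd.comp (Primrec.snd.comp (Primrec.snd.comp hd))
    refine .and (.and (primrecRel_wfTRS.comp h1 h2)
      (.and (primrecRel_wfTRS.comp h1 h3) (primrecRel_wfTerm.comp h1 h4))) ?_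
    exact Primrec.eq.comp (primrec_segRun.comp hd ((Primrec.ofNat _).comp Primrec.snd))
      (Primrec.const none)
  refine ⟨fun n L => decide (WFInst (Denumerable.ofNat Inst n) ∧
      segRun (Denumerable.ofNat Inst n) (Denumerable.ofNat (List ℕ) L) = none),
    hP.decide.to_comp, fun n => ?_⟩
  simp only [Set.mem_ofPred_eq, dpTerm_iff, Denumerable.ofNat_encode, decide_eq_true_iff]
  constructor
  · rintro ⟨h, h'⟩ α
    obtain ⟨k, hk⟩ := h' α
    exact ⟨k, h, hk⟩
  · intro h
    -- Any sequence `α` gives well-formedness, for instance the zero sequence.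
    exact ⟨(h 0).choose_spec.1, fun α => (h α).imp fun _ => And.right⟩

/-! ### A rewrite system that runs a program on guessed inputs -/

section Machine

open Turing.ToPartrec

/-- Numerals: `0` is the constant `0`, and the successor is the symbol `1`. -/
def numT : ℕ → Term
  | 0 => .app 0 []
  | n + 1 => .app 1 [numT n]

/-- Lists of naturals, with the symbols `2` (empty list) and `3` (cons). -/
def listT : List ℕ → Term
  | [] => .app 2 []
  | a :: l => .app 3 [numT a, listT l]

/-- Programs, with the symbols `4` to `10`. -/
def codeT : Code → Term
  | .zero' => .app 4 []
  | .succ => .app 5 []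
  | .tail => .app 6 []
  | .cons f g => .app 7 [codeT f, codeT g]
  | .comp f g => .app 8 [codeT f, codeT g]
  | .case f g => .app 9 [codeT f, codeT g]
  | .fix f => .app 10 [codeT f]

/-- Continuations, with the symbols `11` to `15`. The empty continuation also stores the program `c`
that is to be run again in the next round. -/
def contT (c : Code) : Cont → Term
  | .halt => .app 11 [codeT c]
  | .cons₁ g as k => .app 12 [codeT g, listT as, contT c k]
  | .cons₂ ns k => .app 13 [listT ns, contT c k]
  | .comp f k => .app 14 [codeT f, contT c k]
  | .fix f k => .app 15 [codeT f, contT c k]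

/-- States of the machine: evaluating a program, returning a value to a continuation, and guessing
a number `a` while remembering the current list `v`. -/
inductive St
  | norm (f : Code) (k : Cont) (v : List ℕ)
  | ret (k : Cont) (v : List ℕ)
  | pick (a : ℕ) (v : List ℕ)

/-- States as terms; the root symbols `16`, `17` and `18` occur at the root only. -/
def stT (c : Code) : St → Term
  | .norm f k v => .app 16 [codeT f, contT c k, listT v]
  | .ret k v => .app 17 [contT c k, listT v]
  | .pick a v => .app 18 [codeT c, numT a, listT v]

/-- The possible successors of a state under `S`. The `pick` state either increases its guess, or
starts the program `c` on the guess and the current list. All other states evolve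
deterministically, as in Mathlib's `stepNormal` and `stepRet` but one constructor at a time. -/
def mstep (c : Code) : St → List St
  | .norm .zero' k v => [.ret k (0 :: v)]
  | .norm .succ k v => [.ret k [v.headI.succ]]
  | .norm .tail k v => [.ret k v.tail]
  | .norm (.cons f g) k v => [.norm f (.cons₁ g v k) v]
  | .norm (.comp f g) k v => [.norm g (.comp f k) v]
  | .norm (.case f g) k v => [v.headI.rec (.norm f k v.tail) fun y _ => .norm g k (y :: v.tail)]
  | .norm (.fix f) k v => [.norm f (.fix f k) v]
  | .ret .halt _ => []
  | .ret (.cons₁ g as k) v => [.norm g (.cons₂ v k) as]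
  | .ret (.cons₂ ns k) v => [.ret k (ns.headI :: v)]
  | .ret (.comp f k) v => [.norm f k v]
  | .ret (.fix f k) v => [if v.headI = 0 then .ret k v.tail else .norm f (.fix f k) v.tail]
  | .pick a v => [.pick (a + 1) v, .norm c .halt (a :: v)]

/-- The symbols for data. -/
def dataSig : List (ℕ × ℕ) :=
  [(0, 0), (1, 1), (2, 0), (3, 2), (4, 0), (5, 0), (6, 0), (7, 2), (8, 2), (9, 2), (10, 1),
    (11, 1), (12, 3), (13, 2), (14, 2), (15, 2)]

/-- The symbols for data and the three state symbols. -/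
def machSig : List (ℕ × ℕ) := dataSig ++ [(16, 3), (17, 2), (18, 3)]

open Term in
/-- The rules realizing `mstep`. -/
def sysS : List (Term × Term) :=
  -- evaluation of a program
  [ (app 16 [app 4 [], var 0, var 1], app 17 [var 0, app 3 [app 0 [], var 1]]),
    (app 16 [app 5 [], var 0, app 2 []],
      app 17 [var 0, app 3 [app 1 [app 0 []], app 2 []]]),
    (app 16 [app 5 [], var 0, app 3 [var 1, var 2]],
      app 17 [var 0, app 3 [app 1 [var 1], app 2 []]]),
    (app 16 [app 6 [], var 0, app 2 []], app 17 [var 0, app 2 []]),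
    (app 16 [app 6 [], var 0, app 3 [var 1, var 2]], app 17 [var 0, var 2]),
    (app 16 [app 7 [var 0, var 1], var 2, var 3],
      app 16 [var 0, app 12 [var 1, var 3, var 2], var 3]),
    (app 16 [app 8 [var 0, var 1], var 2, var 3], app 16 [var 1, app 14 [var 0, var 2], var 3]),
    (app 16 [app 9 [var 0, var 1], var 2, app 2 []], app 16 [var 0, var 2, app 2 []]),
    (app 16 [app 9 [var 0, var 1], var 2, app 3 [app 0 [], var 3]], app 16 [var 0, var 2, var 3]),
    (app 16 [app 9 [var 0, var 1], var 2, app 3 [app 1 [var 4], var 3]],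
      app 16 [var 1, var 2, app 3 [var 4, var 3]]),
    (app 16 [app 10 [var 0], var 1, var 2], app 16 [var 0, app 15 [var 0, var 1], var 2]),
    -- return to a continuation
    (app 17 [app 12 [var 0, var 1, var 2], var 3], app 16 [var 0, app 13 [var 3, var 2], var 1]),
    (app 17 [app 13 [app 2 [], var 0], var 1], app 17 [var 0, app 3 [app 0 [], var 1]]),
    (app 17 [app 13 [app 3 [var 0, var 1], var 2], var 3], app 17 [var 2, app 3 [var 0, var 3]]),
    (app 17 [app 14 [var 0, var 1], var 2], app 16 [var 0, var 1, var 2]),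
    (app 17 [app 15 [var 0, var 1], app 2 []], app 17 [var 1, app 2 []]),
    (app 17 [app 15 [var 0, var 1], app 3 [app 0 [], var 2]], app 17 [var 1, var 2]),
    (app 17 [app 15 [var 0, var 1], app 3 [app 1 [var 3], var 2]],
      app 16 [var 0, app 15 [var 0, var 1], var 2]),
    -- guessing
    (app 18 [var 0, var 1, var 2], app 18 [var 0, app 1 [var 1], var 2]),
    (app 18 [var 0, var 1, var 2], app 16 [var 0, app 11 [var 0], app 3 [var 1, var 2]])]

open Term in
/-- The single `R`-rule: a halted machine starts a new round of guessing with its result. -/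
def sysR : List (Term × Term) :=
  [(app 17 [app 11 [var 0], var 1], app 18 [var 0, app 0 [], var 1])]

theorem wfTerm_var (sig : List (ℕ × ℕ)) (n : ℕ) : WFTerm sig (.var n) ↔ True :=
  iff_true_intro (.var n)

theorem wfTerm_app {sig : List (ℕ × ℕ)} {f : ℕ} {ts : List Term} :
    WFTerm sig (.app f ts) ↔ (f, ts.length) ∈ sig ∧ ∀ t ∈ ts, WFTerm sig t :=
  ⟨fun h => by cases h with | app h1 h2 => exact ⟨h1, h2⟩, fun h => .app h.1 h.2⟩

theorem wfTRS_sysS : WFTRS machSig sysS := by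
  refine ⟨by unfold WFSig; decide, ?_⟩
  simp [sysS, wfTerm_app, wfTerm_var, isVarOf_app, isVarOf_var, machSig, dataSig]
  grind

theorem wfTRS_sysR : WFTRS machSig sysR := by
  refine ⟨by unfold WFSig; decide, ?_⟩
  simp [sysR, wfTerm_app, wfTerm_var, isVarOf_app, isVarOf_var, machSig, dataSig]

theorem wf_numT (n : ℕ) : WFTerm dataSig (numT n) := by
  induction n with
  | zero => simp [numT, wfTerm_app, dataSig]
  | succ n ih => rw [numT, wfTerm_app]; exact ⟨by simp [dataSig], by simpa using ih⟩

theorem wf_listT (l : List ℕ) : WFTerm dataSig (listT l) := by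
  induction l with
  | nil => simp [listT, wfTerm_app, dataSig]
  | cons a l ih => rw [listT, wfTerm_app]; exact ⟨by simp [dataSig], by simpa using ⟨wf_numT a, ih⟩⟩

theorem wf_codeT (c : Code) : WFTerm dataSig (codeT c) := by
  induction c with
  | zero' | succ | tail => simp [codeT, wfTerm_app, dataSig]
  | cons f g h1 h2 | comp f g h1 h2 | case f g h1 h2 =>
    rw [codeT, wfTerm_app]; exact ⟨by simp [dataSig], by simpa using ⟨h1, h2⟩⟩
  | fix f h1 => rw [codeT, wfTerm_app]; exact ⟨by simp [dataSig], by simpa using h1⟩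

theorem wf_contT (c : Code) (k : Cont) : WFTerm dataSig (contT c k) := by
  induction k with
  | halt => rw [contT, wfTerm_app]; exact ⟨by simp [dataSig], by simpa using wf_codeT c⟩
  | cons₁ g as k ih =>
    rw [contT, wfTerm_app]
    exact ⟨by simp [dataSig], by simpa using ⟨wf_codeT g, wf_listT as, ih⟩⟩
  | cons₂ ns k ih =>
    rw [contT, wfTerm_app]; exact ⟨by simp [dataSig], by simpa using ⟨wf_listT ns, ih⟩⟩
  | comp f k ih | fix f k ih =>
    rw [contT, wfTerm_app]; exact ⟨by simp [dataSig], by simpa using ⟨wf_codeT f, ih⟩⟩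

theorem WFTerm.mono {sig sig' : List (ℕ × ℕ)} (h : sig ⊆ sig') {t : Term} (ht : WFTerm sig t) :
    WFTerm sig' t := by
  induction ht with
  | var n => exact .var n
  | app h1 _ ih => exact .app (h h1) ih

/-- No rule of `sysS` applies inside data. -/
theorem not_rewrite_data {t u : Term} (ht : WFTerm dataSig t) : ¬ Rewrite sysS t u := by
  intro h
  induction h with
  | rule l r σ h =>
    have hl : ∀ p ∈ sysS, ∃ f ts, p.1 = .app f ts ∧ 16 ≤ f := by simp [sysS]
    obtain ⟨f, ts, h1, h2⟩ := hl _ h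
    simp only at h1
    rw [h1, Term.subst_app, wfTerm_app] at ht
    have hf : ∀ p ∈ dataSig, p.1 < 16 := by simp [dataSig]
    have := hf _ ht.1
    simp only at this
    omega
  | congr f ts₁ ts₂ t t' _ ih => exact ih ((wfTerm_app.1 ht).2 t (by simp))

theorem rewrite_app_cases {S : List (Term × Term)} {f : ℕ} {ts : List Term} {u : Term}
    (h : Rewrite S (.app f ts) u) : RootStep S (.app f ts) u ∨ ∃ t ∈ ts, ∃ t', Rewrite S t t' := by
  generalize hs : Term.app f ts = s at h
  cases h with
  | rule l r σ h => exact .inl ⟨l, r, σ, h, rfl, rfl⟩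
  | congr g ts₁ ts₂ t t' h =>
    cases hs
    exact .inr ⟨t, by simp, t', h⟩

/-- States are rewritten at the root only, since their arguments are data. -/
theorem rewrite_stT {c : Code} {st : St} {u : Term} (h : Rewrite sysS (stT c st) u) :
    RootStep sysS (stT c st) u := by
  cases st with
  | norm f k v =>
    refine (rewrite_app_cases h).resolve_right ?_
    simp only [List.mem_cons, List.not_mem_nil, or_false]
    rintro ⟨t, rfl | rfl | rfl, t', h⟩
    exacts [not_rewrite_data (wf_codeT _) h, not_rewrite_data (wf_contT _ _) h,
      not_rewrite_data (wf_listT _) h]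
  | ret k v =>
    refine (rewrite_app_cases h).resolve_right ?_
    simp only [List.mem_cons, List.not_mem_nil, or_false]
    rintro ⟨t, rfl | rfl, t', h⟩
    exacts [not_rewrite_data (wf_contT _ _) h, not_rewrite_data (wf_listT _) h]
  | pick a v =>
    refine (rewrite_app_cases h).resolve_right ?_
    simp only [List.mem_cons, List.not_mem_nil, or_false]
    rintro ⟨t, rfl | rfl | rfl, t', h⟩
    exacts [not_rewrite_data (wf_codeT _) h, not_rewrite_data (wf_numT _) h,
      not_rewrite_data (wf_listT _) h]

/-- Every `S`-step from a state is a step of the machine. -/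
theorem exists_mstep {c : Code} {st : St} {u : Term} (h : Rewrite sysS (stT c st) u) :
    ∃ st' ∈ mstep c st, u = stT c st' := by
  obtain ⟨l, r, σ, hmem, hl, rfl⟩ := rewrite_stT h
  clear h
  cases st with
  | norm f k v =>
    cases f <;> rcases v with _ | ⟨_ | a, v⟩ <;>
      simp only [sysS, List.mem_cons, Prod.mk.injEq, List.not_mem_nil, or_false] at hmem <;>
      rcases hmem with ⟨rfl, rfl⟩ | ⟨rfl, rfl⟩ | ⟨rfl, rfl⟩ | ⟨rfl, rfl⟩ | ⟨rfl, rfl⟩ | ⟨rfl, rfl⟩ |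
        ⟨rfl, rfl⟩ | ⟨rfl, rfl⟩ | ⟨rfl, rfl⟩ | ⟨rfl, rfl⟩ | ⟨rfl, rfl⟩ | ⟨rfl, rfl⟩ | ⟨rfl, rfl⟩ |
        ⟨rfl, rfl⟩ | ⟨rfl, rfl⟩ | ⟨rfl, rfl⟩ | ⟨rfl, rfl⟩ | ⟨rfl, rfl⟩ | ⟨rfl, rfl⟩ | ⟨rfl, rfl⟩ <;>
      simp [stT, codeT, listT, numT] at hl <;>
      simp [mstep, stT, contT, listT, numT, hl]
  | ret k v =>
    rcases k with _ | _ | ⟨_ | ⟨b, ns⟩, _⟩ | _ | _ <;> rcases v with _ | ⟨_ | a, v⟩ <;>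
      simp only [sysS, List.mem_cons, Prod.mk.injEq, List.not_mem_nil, or_false] at hmem <;>
      rcases hmem with ⟨rfl, rfl⟩ | ⟨rfl, rfl⟩ | ⟨rfl, rfl⟩ | ⟨rfl, rfl⟩ | ⟨rfl, rfl⟩ | ⟨rfl, rfl⟩ |
        ⟨rfl, rfl⟩ | ⟨rfl, rfl⟩ | ⟨rfl, rfl⟩ | ⟨rfl, rfl⟩ | ⟨rfl, rfl⟩ | ⟨rfl, rfl⟩ | ⟨rfl, rfl⟩ |
        ⟨rfl, rfl⟩ | ⟨rfl, rfl⟩ | ⟨rfl, rfl⟩ | ⟨rfl, rfl⟩ | ⟨rfl, rfl⟩ | ⟨rfl, rfl⟩ | ⟨rfl, rfl⟩ <;>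
      simp [stT, contT, listT, numT] at hl <;>
      simp [mstep, stT, contT, listT, numT, hl]
  | pick a v =>
    simp only [sysS, List.mem_cons, Prod.mk.injEq, List.not_mem_nil, or_false] at hmem
    rcases hmem with ⟨rfl, rfl⟩ | ⟨rfl, rfl⟩ | ⟨rfl, rfl⟩ | ⟨rfl, rfl⟩ | ⟨rfl, rfl⟩ | ⟨rfl, rfl⟩ |
      ⟨rfl, rfl⟩ | ⟨rfl, rfl⟩ | ⟨rfl, rfl⟩ | ⟨rfl, rfl⟩ | ⟨rfl, rfl⟩ | ⟨rfl, rfl⟩ | ⟨rfl, rfl⟩ |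
      ⟨rfl, rfl⟩ | ⟨rfl, rfl⟩ | ⟨rfl, rfl⟩ | ⟨rfl, rfl⟩ | ⟨rfl, rfl⟩ | ⟨rfl, rfl⟩ | ⟨rfl, rfl⟩ <;>
    simp [stT] at hl <;>
    simp [mstep, stT, contT, listT, numT, hl]

/-- The `i`-th rule of `sysS`, applied under the substitution given by the list `L`. -/
theorem rewrite_getElem (i : ℕ) (h : i < sysS.length) (L : List Term) :
    Rewrite sysS (sysS[i].1.subst (substOf L)) (sysS[i].2.subst (substOf L)) :=
  .rule _ _ _ (List.getElem_mem h)

/-- Every step of the machine is an `S`-step. -/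
theorem rewrite_of_mstep {c : Code} {st st' : St} (h : st' ∈ mstep c st) :
    Rewrite sysS (stT c st) (stT c st') := by
  cases st with
  | norm f k v =>
    cases f with
    | zero' =>
      cases List.mem_singleton.1 h
      simpa [sysS, stT, codeT, listT, numT, substOf] using
        rewrite_getElem 0 (by decide) [contT c k, listT v]
    | succ =>
      cases List.mem_singleton.1 h
      cases v with
      | nil =>
        simpa [sysS, stT, codeT, listT, numT, substOf] using
          rewrite_getElem 1 (by decide) [contT c k]
      | cons a v =>
        simpa [sysS, stT, codeT, listT, numT, substOf] using
          rewrite_getElem 2 (by decide) [contT c k, numT a, listT v]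
    | tail =>
      cases List.mem_singleton.1 h
      cases v with
      | nil =>
        simpa [sysS, stT, codeT, listT, numT, substOf] using
          rewrite_getElem 3 (by decide) [contT c k]
      | cons a v =>
        simpa [sysS, stT, codeT, listT, numT, substOf] using
          rewrite_getElem 4 (by decide) [contT c k, numT a, listT v]
    | cons f g =>
      cases List.mem_singleton.1 h
      simpa [sysS, stT, codeT, contT, substOf] using
        rewrite_getElem 5 (by decide) [codeT f, codeT g, contT c k, listT v]
    | comp f g =>
      cases List.mem_singleton.1 h
      simpa [sysS, stT, codeT, contT, substOf] using
        rewrite_getElem 6 (by decide) [codeT f, codeT g, contT c k, listT v]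
    | case f g =>
      rcases v with _ | ⟨_ | a, v⟩
      · cases List.mem_singleton.1 h
        simpa [sysS, stT, codeT, listT, substOf] using
          rewrite_getElem 7 (by decide) [codeT f, codeT g, contT c k]
      · cases List.mem_singleton.1 h
        simpa [sysS, stT, codeT, listT, numT, substOf] using
          rewrite_getElem 8 (by decide) [codeT f, codeT g, contT c k, listT v]
      · cases List.mem_singleton.1 h
        simpa [sysS, stT, codeT, listT, numT, substOf] using
          rewrite_getElem 9 (by decide) [codeT f, codeT g, contT c k, listT v, numT a]
    | fix f =>
      cases List.mem_singleton.1 h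
      simpa [sysS, stT, codeT, contT, substOf] using
        rewrite_getElem 10 (by decide) [codeT f, contT c k, listT v]
  | ret k v =>
    cases k with
    | halt => simp [mstep] at h
    | cons₁ g as k =>
      cases List.mem_singleton.1 h
      simpa [sysS, stT, contT, substOf] using
        rewrite_getElem 11 (by decide) [codeT g, listT as, contT c k, listT v]
    | cons₂ ns k =>
      cases List.mem_singleton.1 h
      cases ns with
      | nil =>
        simpa [sysS, stT, contT, listT, numT, substOf] using
          rewrite_getElem 12 (by decide) [contT c k, listT v]
      | cons a ns =>
        simpa [sysS, stT, contT, listT, numT, substOf] using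
          rewrite_getElem 13 (by decide) [numT a, listT ns, contT c k, listT v]
    | comp f k =>
      cases List.mem_singleton.1 h
      simpa [sysS, stT, contT, substOf] using
        rewrite_getElem 14 (by decide) [codeT f, contT c k, listT v]
    | fix f k =>
      rcases v with _ | ⟨_ | a, v⟩
      · cases List.mem_singleton.1 h
        simpa [sysS, stT, contT, listT, substOf] using
          rewrite_getElem 15 (by decide) [codeT f, contT c k]
      · cases List.mem_singleton.1 h
        simpa [sysS, stT, contT, listT, numT, substOf] using
          rewrite_getElem 16 (by decide) [codeT f, contT c k, listT v]
      · cases List.mem_singleton.1 h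
        simpa [sysS, stT, contT, listT, numT, substOf] using
          rewrite_getElem 17 (by decide) [codeT f, contT c k, listT v, numT a]
  | pick a v =>
    simp only [mstep, List.mem_cons, List.not_mem_nil, or_false] at h
    rcases h with rfl | rfl
    · simpa [sysS, stT, numT, substOf] using
        rewrite_getElem 18 (by decide) [codeT c, numT a, listT v]
    · simpa [sysS, stT, contT, listT, substOf] using
        rewrite_getElem 19 (by decide) [codeT c, numT a, listT v]

/-- Root `R`-steps are possible at halted states only, and start a new round. -/
theorem rootStep_sysR {c : Code} {st : St} {t : Term} :
    RootStep sysR (stT c st) t ↔ ∃ v, st = .ret .halt v ∧ t = stT c (.pick 0 v) := by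
  constructor
  · rintro ⟨l, r, σ, h, hl, rfl⟩
    simp only [sysR, List.mem_singleton, Prod.mk.injEq] at h
    obtain ⟨rfl, rfl⟩ := h
    cases st with
    | norm | pick => simp [stT] at hl
    | ret k v =>
      cases k with
      | halt =>
        simp only [stT, contT, Term.subst_app, Term.subst_var, List.map_cons, List.map_nil,
          Term.app.injEq, List.cons.injEq, true_and, and_true] at hl
        exact ⟨v, rfl, by simp [stT, numT, hl]⟩
      | _ => simp [stT, contT] at hl
  · rintro ⟨v, rfl, rfl⟩
    exact ⟨_, _, substOf [codeT c, listT v], List.mem_singleton.2 rfl,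
      by simp [stT, contT, substOf], by simp [stT, numT, substOf]⟩

/-- The outcome that Mathlib's semantics of programs assigns to a state. -/
def outcome : St → Part Cfg
  | .norm f k v => StateTransition.eval step (stepNormal f k v)
  | .ret k v => StateTransition.eval step (stepRet k v)
  | .pick _ _ => .none

theorem eval_ret (k : Cont) (v : List ℕ) :
    StateTransition.eval step (.ret k v) = StateTransition.eval step (stepRet k v) :=
  StateTransition.reaches_eval (.single rfl)

/-- Apart from guessing, machine steps do not change the outcome. -/
theorem outcome_mstep {c : Code} {st st' : St} (h : st' ∈ mstep c st)
    (hp : ∀ a v, st ≠ .pick a v) : outcome st = outcome st' := by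
  cases st with
  | norm f k v =>
    cases f with
    | zero' | succ | tail => cases List.mem_singleton.1 h; exact eval_ret _ _
    | case f g => rcases v with _ | ⟨_ | a, v⟩ <;> cases List.mem_singleton.1 h <;> rfl
    | _ => cases List.mem_singleton.1 h; rfl
  | ret k v =>
    cases k with
    | halt => simp [mstep] at h
    | fix f k => rcases v with _ | ⟨_ | a, v⟩ <;> cases List.mem_singleton.1 h <;> rfl
    | _ => cases List.mem_singleton.1 h; rfl
  | pick a v => exact absurd rfl (hp a v)

/-- The invariant of a round that began with the list `v`: either a number is still being guessed,
or the program runs on `a :: v` for some guess `a`. -/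
def RoundInv (c : Code) (v : List ℕ) (st : St) : Prop :=
  (∃ a, st = .pick a v) ∨
    (∀ a v', st ≠ .pick a v') ∧ ∃ a, outcome st = outcome (.norm c .halt (a :: v))

theorem inv_mstep {c : Code} {v : List ℕ} {st st' : St} (hi : RoundInv c v st)
    (h : st' ∈ mstep c st) : RoundInv c v st' := by
  rcases hi with ⟨a, rfl⟩ | ⟨hp, a, ha⟩
  · simp only [mstep, List.mem_cons, List.not_mem_nil, or_false] at h
    rcases h with rfl | rfl
    · exact .inl ⟨a + 1, rfl⟩
    · exact .inr ⟨by simp, a, rfl⟩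
  · refine .inr ⟨fun b v' => ?_, a, (outcome_mstep h hp).symm.trans ha⟩
    rintro rfl
    cases st with
    | norm f k v => cases f <;> rcases v with _ | ⟨_ | a, v⟩ <;> simp [mstep] at h
    | ret k v => cases k <;> rcases v with _ | ⟨_ | a, v⟩ <;> simp [mstep] at h
    | pick a v => exact absurd rfl (hp a v)

theorem inv_reduces {c : Code} {v : List ℕ} {u : Term}
    (h : Relation.ReflTransGen (Rewrite sysS) (stT c (.pick 0 v)) u) :
    ∃ st, u = stT c st ∧ RoundInv c v st := by
  induction h with
  | refl => exact ⟨_, rfl, .inl ⟨0, rfl⟩⟩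
  | tail _ h ih =>
    obtain ⟨st, rfl, hi⟩ := ih
    obtain ⟨st', h', rfl⟩ := exists_mstep h
    exact ⟨st', rfl, inv_mstep hi h'⟩

theorem mem_eval_of_outcome {c : Code} {v w : List ℕ}
    (h : outcome (.ret .halt w) = outcome (.norm c .halt v)) : w ∈ c.eval v := by
  have h1 : Cfg.halt w ∈ outcome (.norm c .halt v) := by
    rw [← h]
    exact StateTransition.mem_eval.2 ⟨.refl, rfl⟩
  rw [outcome, stepNormal_eval, Part.map_eq_map, Part.mem_map_iff] at h1
  obtain ⟨w', hw, he⟩ := h1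
  cases he
  exact hw

/-- The state that corresponds to a configuration of Mathlib's machine. -/
def toSt : Cfg → St
  | .halt v => .ret .halt v
  | .ret k v => .ret k v

/-- Reachability of states under `S`. -/
def Reach (c : Code) (s t : St) : Prop :=
  Relation.ReflTransGen (Rewrite sysS) (stT c s) (stT c t)

theorem Reach.head {c : Code} {s s' t : St} (h : s' ∈ mstep c s) (h' : Reach c s' t) :
    Reach c s t := Relation.ReflTransGen.head (rewrite_of_mstep h) h'

theorem reach_stepNormal (c f : Code) (k : Cont) (v : List ℕ) :
    Reach c (.norm f k v) (toSt (stepNormal f k v)) := by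
  induction f generalizing k v with
  | zero' | succ | tail => exact .head (List.mem_singleton.2 rfl) .refl
  | cons f g ih _ | comp f g _ ih | fix f ih => exact .head (List.mem_singleton.2 rfl) (ih _ _)
  | case f g ih1 ih2 =>
    rcases v with _ | ⟨_ | a, v⟩
    exacts [.head (List.mem_singleton.2 rfl) (ih1 _ _), .head (List.mem_singleton.2 rfl) (ih1 _ _),
      .head (List.mem_singleton.2 rfl) (ih2 _ _)]

theorem reach_stepRet (c : Code) (k : Cont) (v : List ℕ) :
    Reach c (.ret k v) (toSt (stepRet k v)) := by
  induction k generalizing v with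
  | halt => exact .refl
  | cons₁ g as k _ | comp f k _ => exact .head (List.mem_singleton.2 rfl) (reach_stepNormal _ _ _ _)
  | cons₂ ns k ih => exact .head (List.mem_singleton.2 rfl) (ih _)
  | fix f k ih =>
    rcases v with _ | ⟨_ | a, v⟩
    exacts [.head (List.mem_singleton.2 rfl) (ih _), .head (List.mem_singleton.2 rfl) (ih _),
      .head (List.mem_singleton.2 rfl) (reach_stepNormal _ _ _ _)]

theorem reach_eval {c : Code} {v w : List ℕ} (h : w ∈ c.eval v) :
    Reach c (.norm c .halt v) (.ret .halt w) := by
  have h1 : Cfg.halt w ∈ StateTransition.eval step (stepNormal c .halt v) := by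
    rw [stepNormal_eval, Part.map_eq_map]
    exact Part.mem_map _ h
  refine (reach_stepNormal c c .halt v).trans ?_
  have h2 := (StateTransition.mem_eval.1 h1).1
  change Reach c _ (toSt (.halt w))
  generalize Cfg.halt w = z at h2
  induction h2 with
  | refl => exact .refl
  | @tail x y _ h ih =>
    refine Relation.ReflTransGen.trans ih ?_
    cases x with
    | halt => simp [step] at h
    | ret k v =>
      cases Option.mem_some_iff.1 h
      exact reach_stepRet c k v

theorem reach_pick (c : Code) (a : ℕ) (v : List ℕ) : Reach c (.pick 0 v) (.pick a v) := by
  induction a with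
  | zero => exact .refl
  | succ a ih => exact .tail ih (rewrite_of_mstep (by simp [mstep]))

/-- One round from the list `v`: `S`-steps followed by an `R`-step at the root lead exactly to the
lists that the program `c` computes from `a :: v` for some guess `a`. -/
theorem round_iff {c : Code} {v : List ℕ} {t : Term} :
    (∃ y, Relation.ReflTransGen (Rewrite sysS) (stT c (.pick 0 v)) y ∧ RootStep sysR y t) ↔
      ∃ w a, w ∈ c.eval (a :: v) ∧ t = stT c (.pick 0 w) := by
  constructor
  · rintro ⟨y, h1, h2⟩
    obtain ⟨st, rfl, hi⟩ := inv_reduces h1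
    obtain ⟨w, rfl, rfl⟩ := rootStep_sysR.1 h2
    rcases hi with ⟨a, ha⟩ | ⟨-, a, ha⟩
    · cases ha
    · exact ⟨w, a, mem_eval_of_outcome ha, rfl⟩
  · rintro ⟨w, a, h, rfl⟩
    refine ⟨stT c (.ret .halt w), (reach_pick c a v).trans ?_, rootStep_sysR.2 ⟨w, rfl, rfl⟩⟩
    exact .head (rewrite_of_mstep (by simp [mstep])) (reach_eval h)

/-- The instance whose infinite chains are the infinite iterations of `c` on `v`, where each round
receives an arbitrary additional number. -/
def machInst (c : Code) (v : List ℕ) : Inst := (machSig, sysR, sysS, stT c (.pick 0 v))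

theorem wfInst_machInst (c : Code) (v : List ℕ) : WFInst (machInst c v) := by
  have hs : dataSig ⊆ machSig := List.subset_append_left _ _
  refine ⟨wfTRS_sysR, wfTRS_sysS, wfTerm_app.2 ⟨by simp [machInst, machSig], ?_⟩⟩
  simpa using ⟨(wf_codeT c).mono hs, (wf_numT 0).mono hs, (wf_listT v).mono hs⟩

theorem dpTerm_machInst (c : Code) (v : List ℕ) : DPTerm (machInst c v) ↔
    ¬ ∃ w : ℕ → List ℕ, w 0 = v ∧ ∀ k, ∃ a, w (k + 1) ∈ c.eval (a :: w k) := by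
  rw [← not_iff_not, not_not, dpTerm_iff_chain]
  constructor
  · rintro ⟨x, h0, hx⟩
    have hstep : ∀ k v, x k = stT c (.pick 0 v) →
        ∃ w a, w ∈ c.eval (a :: v) ∧ x (k + 1) = stT c (.pick 0 w) := fun k v hk =>
      round_iff.1 (hk ▸ hx k)
    choose! F hF using hstep
    let w : ℕ → List ℕ := Nat.rec v F
    have hw : ∀ k, x k = stT c (.pick 0 (w k)) := fun k => by
      induction k with
      | zero => exact h0
      | succ k ih => obtain ⟨a, -, h⟩ := hF k _ ih; exact h
    exact ⟨w, rfl, fun k => (hF k _ (hw k)).imp fun a h => h.1⟩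
  · rintro ⟨w, h0, hw⟩
    refine ⟨fun k => stT c (.pick 0 (w k)), by simp only [h0, machInst], fun k => ?_⟩
    obtain ⟨a, ha⟩ := hw k
    exact round_iff.2 ⟨_, a, ha, rfl⟩

end Machine

/-! ### Hardness -/

section Hardness

open Turing.ToPartrec

theorem primrec_numT : Primrec numT := by
  have : Primrec₂ fun (_ : ℕ) (p : ℕ × Term) => Term.app 1 [p.2] :=
    primrec_app.comp (.const 1)
      (Primrec.list_cons.comp (Primrec.snd.comp .snd) (.const []))
  refine (Primrec.nat_rec (Primrec.const (numT 0)) this).comp .id .id |>.of_eq fun n => ?_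
  induction n with
  | zero => rfl
  | succ n ih => simp only [id, numT, ← ih]

theorem computable_machInst (c : Code) {g : ℕ → ℕ} (hg : Primrec g) :
    Computable fun n => Encodable.encode (machInst c [g n]) := by
  have hl : Primrec fun n => listT [g n] :=
    primrec_app.comp (.const 3) <|
      Primrec.list_cons.comp (primrec_numT.comp hg) (.const [listT []])
  have ht : Primrec fun n => stT c (.pick 0 [g n]) :=
    primrec_app.comp (.const 18) <| Primrec.list_cons.comp (.const (codeT c)) <|
      Primrec.list_cons.comp (.const (numT 0)) <| Primrec.list_cons.comp hl (.const [])
  exact (Primrec.encode.comp <| Primrec.pair (.const machSig) <| Primrec.pair (.const sysR) <|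
    Primrec.pair (.const sysS) ht).to_comp

/-- For a computable `p` there is a program that maps a number `a` and (the code of) a pair of `n`
and a finite sequence `s` with `¬ p n s` to the code of the pair of `n` and `s` extended by `a`, and
that diverges when `p n s`. -/
theorem exists_extend {p : ℕ → ℕ → Bool} (hp : Computable fun x : ℕ × ℕ => p x.1 x.2) :
    ∃ c : Code, ∀ (a n : ℕ) (s w : List ℕ), w ∈ c.eval [a, Nat.pair n (Encodable.encode s)] ↔
      p n (Encodable.encode s) = false ∧ w = [Nat.pair n (Encodable.encode (s ++ [a]))] := by
  let F : ℕ → ℕ → Option ℕ := fun a m => bif p m.unpair.1 m.unpair.2 then none else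
    some (Nat.pair m.unpair.1 (Encodable.encode (Denumerable.ofNat (List ℕ) m.unpair.2 ++ [a])))
  have hu : Computable fun x : ℕ × ℕ => x.2.unpair := (Primrec.unpair.comp .snd).to_comp
  have hF : Computable₂ F := by
    refine Computable.cond (hp.comp hu) (.const none) (Computable.option_some.comp ?_)
    refine Primrec.to_comp ?_
    have hu' : Primrec fun x : ℕ × ℕ => x.2.unpair := Primrec.unpair.comp .snd
    exact Primrec₂.natPair.comp (Primrec.fst.comp hu') <| Primrec.encode.comp <|
      Primrec.list_append.comp ((Primrec.ofNat (List ℕ)).comp (Primrec.snd.comp hu'))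
        (Primrec.list_cons.comp .fst (.const []))
  have hP : Partrec₂ fun a m => (F a m : Part ℕ) := Computable.ofOption hF
  obtain ⟨c, hc⟩ := Code.exists_code (Nat.Partrec'.part_iff₂.2 hP)
  refine ⟨c, fun a n s w => ?_⟩
  have h := hc ⟨[a, Nat.pair n (Encodable.encode s)], rfl⟩
  simp only at h
  rw [h]
  change w ∈ pure <$> (F a (Nat.pair n (Encodable.encode s)) : Part ℕ) ↔ _
  simp only [F, Nat.unpair_pair, Denumerable.ofNat_encode]
  cases p n (Encodable.encode s) <;> simp [eq_comm, pure]

/-- A set given by `∀ α ∃ k, p n ⟨α 0, …, α (k - 1)⟩` is reduced to the problem by the instances that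
extend the empty sequence by guessed numbers as long as `p n` is false: the infinite chains for `n`
are the sequences `α` all of whose initial segments violate `p n`. -/
theorem pi11_manyOneRed {B : Set ℕ} (hB : Pi11 B) :
    ManyOneRed B {n | WFInst (Denumerable.ofNat Inst n) ∧ DPTerm (Denumerable.ofNat Inst n)} := by
  obtain ⟨p, hp, hB⟩ := hB
  obtain ⟨c, hc⟩ := exists_extend hp
  refine ⟨fun n => Encodable.encode (machInst c [Nat.pair n 0]),
    computable_machInst c (Primrec₂.natPair.comp .id (.const 0)), fun n => ?_⟩
  change n ∈ B ↔ WFInst (Denumerable.ofNat Inst _) ∧ DPTerm (Denumerable.ofNat Inst _)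
  rw [Denumerable.ofNat_encode, dpTerm_machInst, hB]
  simp only [wfInst_machInst, true_and]
  rw [← not_iff_not, not_not]
  push Not
  constructor
  · rintro ⟨α, hα⟩
    refine ⟨fun k => [Nat.pair n (Encodable.encode (List.ofFn fun i : Fin k => α i))], rfl,
      fun k => ⟨α k, (hc _ _ _ _).2 ⟨by simpa using hα k, ?_⟩⟩⟩
    beta_reduce
    rw [List.ofFn_succ_last]
    rfl
  · rintro ⟨w, h0, hw⟩
    choose α hα using hw
    have key : ∀ k, w k = [Nat.pair n (Encodable.encode (List.ofFn fun i : Fin k => α i))] := by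
      intro k
      induction k with
      | zero => exact h0
      | succ k ih =>
        have := hα k
        rw [ih] at this
        rw [((hc _ _ _ _).1 this).2, List.ofFn_succ_last]
        rfl
    refine ⟨α, fun k => ?_⟩
    have := hα k
    rw [key k] at this
    simpa using ((hc _ _ _ _).1 this).1

end Hardness

/-- The single-term dependency pair problem: the set of (codes of) triples
`(R, S, t)` such that no infinite `(→_{R,ε} ∪ →_S)`-rewrite sequence starting
from `t` contains infinitely many `→_{R,ε}`-steps, is Π¹₁-complete. -/
theorem dp_single_term_Pi11Complete :
    Pi11Complete { n : ℕ | ∃ (sig : List (ℕ × ℕ)) (R S : List (Term × Term)) (t : Term),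
      WFTRS sig R ∧ WFTRS sig S ∧ WFTerm sig t ∧ n = Nat.pair (encodeSig sig) (Nat.pair (encodeTRS R) (Nat.pair (encodeTRS S) t.encode)) ∧
      ∀ f : ℕ → Term, f 0 = t →
        (∀ k : ℕ, RootStep R (f k) (f (k + 1)) ∨ Rewrite S (f k) (f (k + 1))) →
        ¬ ∀ m : ℕ, ∃ k : ℕ, m ≤ k ∧ RootStep R (f k) (f (k + 1)) } := by
  have h : ∀ n, _ ↔ _ := mem_dpSet_iff
  refine (Set.ext h : _ = {n | WFInst (Denumerable.ofNat Inst n) ∧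
    DPTerm (Denumerable.ofNat Inst n)}) ▸ ⟨pi11_dp, fun B => pi11_manyOneRed⟩
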